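/- arXiv:0810.1840 — 3 statements merged into one kernel-verified Lean document; each statement's English description precedes it below -/
import Mathlib

section
/- Let G be a finite group that is an internal semidirect product G = H ⋊ K (H normal in G, K a subgroup, H ∩ K = {1}, HK = G), and let π : G → K be the canonical projection sending g = hk (with h ∈ H, k ∈ K) to k. Let C ⊆ G be conjugation-invariant with K ⊆ C, and suppose the number of G-conjugacy classes contained in C equals the number of conjugacy classes of K. Then the set {ψ∘π : ψ ∈ Irr(K)} consists of irreducible characters of G (namely those with H contained in their kernel), and it is a C-basic set of G. -/
/-!
The projection `p : G → Q` of a split extension is split by a homomorphism `s : Q → G`, so classes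
of `Q` inject into classes of `G`. When there are as many classes in `Q` as there are classes of `G`
contained in `C`, this injection is onto, and every `g ∈ C` is conjugate to `s (p g)`. A class
function on `G` therefore agrees on `C` with the inflation of its restriction along `s`. For a
character of `G` this restriction is, by Maschke's theorem, a sum of irreducible characters of `Q`,
so the truncated inflations span. They are independent because restricting the truncation of
`ψ ∘ p` along `s` recovers `ψ`, and irreducible characters are orthonormal.
-/

open scoped Classical

noncomputable section

/-- The set of irreducible complex characters of the group `G`. -/
def IrrChar (G : Type) [Group G] : Set (G → ℂ) :=
  {χ | ∃ V : FDRep ℂ G, CategoryTheory.Simple V ∧ χ = FDRep.character V}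

/-- Truncation of a class function to the subset `C`: `φ^C`. -/
def truncCF {G : Type} (C : Set G) (φ : G → ℂ) : G → ℂ := fun g =>
  if g ∈ C then φ g else 0

/-- The scalar product of class functions across the subset `C`:
`⟨α,β⟩_C = (1/|G|) · Σ_{g ∈ C} α(g) · conj(β(g))`. -/
def innerOn {G : Type} [Fintype G] (C : Set G) (α β : G → ℂ) : ℂ :=
  (Fintype.card G : ℂ)⁻¹ * ∑ g : G, if g ∈ C then α g * (starRingEnd ℂ) (β g) else 0

/-- `B` is a `C`-basic set of `b`: `B ⊆ b` and the truncations `χ^C` for `χ ∈ B` form a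
`ℤ`-basis of the `ℤ`-submodule of class functions generated by the `χ^C`, `χ ∈ b`. -/
def IsBasicSetOf {G : Type} [Group G] (C : Set G) (b B : Set (G → ℂ)) : Prop :=
  B ⊆ b ∧
  LinearIndependent ℤ (fun χ : B => truncCF C (χ : G → ℂ)) ∧
  Submodule.span ℤ (truncCF C '' B) = Submodule.span ℤ (truncCF C '' b)

/-- The set of `p`-regular elements of `G` (elements of order coprime to `p`). -/
def pRegular (p : ℕ) (G : Type) [Group G] : Set G :=
  {g | Nat.Coprime (orderOf g) p}

section Irreducible

open CategoryTheory

universe u v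

theorem rep_simple_of_isIrreducible {k : Type u} {G : Type v} [Field k] [Monoid G] (V : Rep.{u} k G)
    [V.ρ.IsIrreducible] : Simple V := by
  rw [← simple_obj_iff Rep.equivalenceModuleMonoidAlgebra.functor, simple_iff_isSimpleModule']
  exact (Representation.irreducible_iff_isSimpleModule_asModule V.ρ).mp inferInstance

variable {k : Type u} {G : Type v} [Field k] [Monoid G]

theorem fdRep_nontrivial_of_simple (V : FDRep k G) [Simple V] : Nontrivial V := by
  by_contra hV
  have := not_nontrivial_iff_subsingleton.mp hV
  exact id_nonzero V <| (forget₂ (FDRep k G) (Rep k G)).map_injective <| by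
    ext v
    exact Subsingleton.elim (α := V) _ _

/-- The inclusion of a subrepresentation of `V`, as a morphism of `FDRep k G`; it allows simplicity
of `V` to be tested on subrepresentations. -/
def subrepresentationInclusion {V : FDRep k G} (σ : Subrepresentation V.ρ) :
    FDRep.of σ.toRepresentation ⟶ V :=
  FDRep.forget₂HomLinearEquiv _ _ (Rep.ofHom ⟨σ.toSubmodule.subtype, fun _ => rfl⟩)

theorem eq_bot_or_eq_top_of_simple {V : FDRep k G} [Simple V] (σ : Subrepresentation V.ρ) :
    σ = ⊥ ∨ σ = ⊤ := by
  let F := forget₂ (FDRep k G) (Rep k G)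
  let ι := subrepresentationInclusion σ
  have : Mono (F.map ι) := (Rep.mono_iff_injective _).mpr Subtype.val_injective
  have : Mono ι := F.mono_of_mono_map this
  by_cases hι : ι = 0
  · left
    refine Subrepresentation.toSubmodule_injective ((Submodule.eq_bot_iff _).mpr fun v hv => ?_)
    exact congr((F.map $hι).hom ⟨v, hv⟩)
  · right
    have : IsIso ι := isIso_of_mono_of_nonzero hι
    have hsurj : Function.Surjective (F.map ι).hom := (Rep.epi_iff_surjective _).mp inferInstance
    refine Subrepresentation.toSubmodule_injective (Submodule.eq_top_iff'.mpr fun v => ?_)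
    obtain ⟨w, rfl⟩ := hsurj v
    exact w.2

theorem nontrivial_subrepresentation {R M V : Type*} [Semiring R] [Monoid M] [AddCommMonoid V]
    [Module R V] [Nontrivial V] (ρ : Representation R M V) : Nontrivial (Subrepresentation ρ) :=
  ⟨⊥, ⊤, fun h => bot_ne_top (α := Submodule R V) (congrArg Subrepresentation.toSubmodule h)⟩

theorem fdRep_simple_iff_isIrreducible (V : FDRep k G) :
    Simple V ↔ Representation.IsIrreducible V.ρ := by
  constructor
  · intro _
    have := fdRep_nontrivial_of_simple V
    have := nontrivial_subrepresentation V.ρ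
    exact ⟨eq_bot_or_eq_top_of_simple⟩
  · intro hV
    let F := forget₂ (FDRep k G) (Rep k G)
    have : (F.obj V).ρ.IsIrreducible := hV
    have : Simple (F.obj V) := rep_simple_of_isIrreducible _
    exact F.simple_of_simple_obj V

end Irreducible

/-- Inflating a representation along a surjective homomorphism `f` does not change the lattice of
invariant subspaces. -/
def subrepresentationCompOrderIso {R G Q V : Type*} [Semiring R] [Monoid G] [Monoid Q]
    [AddCommMonoid V] [Module R V] (ρ : Representation R Q V) {f : G →* Q}
    (hf : Function.Surjective f) :
    Subrepresentation (MonoidHom.comp ρ f : Representation R G V) ≃o Subrepresentation ρ where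
  toFun σ := ⟨σ.toSubmodule, hf.forall.mpr σ.apply_mem_toSubmodule⟩
  invFun σ := ⟨σ.toSubmodule, fun g => σ.apply_mem_toSubmodule (f g)⟩
  left_inv _ := rfl
  right_inv _ := rfl
  map_rel_iff' := Iff.rfl

theorem isIrreducible_comp_iff {k G Q V : Type*} [Field k] [Monoid G] [Monoid Q] [AddCommGroup V]
    [Module k V] (ρ : Representation k Q V) {f : G →* Q} (hf : Function.Surjective f) :
    Representation.IsIrreducible (MonoidHom.comp ρ f : Representation k G V) ↔ ρ.IsIrreducible :=
  (subrepresentationCompOrderIso ρ hf).isSimpleOrder_iff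

theorem comp_mem_irrChar {G Q : Type} [Group G] [Group Q] {f : G →* Q}
    (hf : Function.Surjective f) {ψ : Q → ℂ} (hψ : ψ ∈ IrrChar Q) : ψ ∘ f ∈ IrrChar G := by
  obtain ⟨V, hV, rfl⟩ := hψ
  rw [fdRep_simple_iff_isIrreducible] at hV
  refine ⟨FDRep.of (MonoidHom.comp V.ρ f), ?_, rfl⟩
  exact (fdRep_simple_iff_isIrreducible _).mpr ((isIrreducible_comp_iff _ hf).mpr hV)

section Orthogonality

variable {G : Type} [Group G]

theorem irrChar_orthonormal [Fintype G] (χ η : IrrChar G) :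
    (Nat.card G : ℂ)⁻¹ * ∑ g, χ.1 g * η.1 g⁻¹ = if χ = η then 1 else 0 := by
  have : Invertible (Nat.card G : ℂ) := invertibleOfNonzero (NeZero.ne _)
  obtain ⟨_, V, _, rfl⟩ := χ
  obtain ⟨_, W, _, rfl⟩ := η
  by_cases h : V.character = W.character
  · have horth := FDRep.char_orthonormal V V
    rw [if_pos ⟨CategoryTheory.Iso.refl V⟩] at horth
    simpa [h] using horth
  · have horth := FDRep.char_orthonormal V W
    rw [if_neg fun ⟨i⟩ => h (FDRep.char_iso i)] at horth
    rw [if_neg fun h' => h (Subtype.ext_iff.mp h')]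
    simpa using horth

theorem linearIndepOn_irrChar [Finite G] : LinearIndepOn ℂ id (IrrChar G) := by
  have := Fintype.ofFinite G
  let pairing (η : IrrChar G) : Module.Dual ℂ (G → ℂ) :=
    (Nat.card G : ℂ)⁻¹ • ∑ g, η.1 g⁻¹ • LinearMap.proj g
  have hpairing (χ η : IrrChar G) : pairing η χ = if χ = η then 1 else 0 := by
    rw [← irrChar_orthonormal]
    simp [pairing, mul_comm]
  refine LinearIndependent.of_pairwise_dual_eq_zero_one _ pairing (fun η χ h => ?_) fun χ => ?_
  · exact (hpairing χ η).trans (if_neg h.symm)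
  · exact (hpairing χ χ).trans (if_pos rfl)

end Orthogonality

theorem trace_eq_add_of_isCompl {R M : Type*} [CommRing R] [AddCommGroup M] [Module R M]
    {P Q : Submodule R M} [Module.Finite R P] [Module.Free R P] [Module.Finite R Q]
    [Module.Free R Q] (h : IsCompl P Q) {f : M →ₗ[R] M} (hP : ∀ v ∈ P, f v ∈ P)
    (hQ : ∀ v ∈ Q, f v ∈ Q) :
    LinearMap.trace R M f
      = LinearMap.trace R P (f.restrict hP) + LinearMap.trace R Q (f.restrict hQ) := by
  have hconj :
      (Submodule.prodEquivOfIsCompl P Q h).conj ((f.restrict hP).prodMap (f.restrict hQ)) = f := by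
    refine LinearMap.ext fun v => ?_
    obtain ⟨w, rfl⟩ := (Submodule.prodEquivOfIsCompl P Q h).surjective v
    simp [LinearEquiv.conj_apply_apply]
  calc LinearMap.trace R M f
      = LinearMap.trace R (P × Q) ((f.restrict hP).prodMap (f.restrict hQ)) := by
        conv_lhs => rw [← hconj, LinearMap.trace_conj']
    _ = _ := LinearMap.trace_prodMap' _ _

theorem exists_isCompl_ne_bot_of_not_isSimpleOrder {α : Type*} [Lattice α] [BoundedOrder α]
    [ComplementedLattice α] [Nontrivial α] (h : ¬IsSimpleOrder α) :
    ∃ a b : α, IsCompl a b ∧ a ≠ ⊥ ∧ b ≠ ⊥ := by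
  by_contra! hα
  refine h ⟨fun a => ?_⟩
  obtain ⟨b, hab⟩ := exists_isCompl a
  exact or_iff_not_imp_left.mpr fun ha => eq_top_of_isCompl_bot (hα a b hab ha ▸ hab)

theorem isCompl_toSubmodule {R G V : Type*} [Semiring R] [Monoid G] [AddCommMonoid V] [Module R V]
    {ρ : Representation R G V} {σ τ : Subrepresentation ρ} (h : IsCompl σ τ) :
    IsCompl σ.toSubmodule τ.toSubmodule :=
  IsCompl.of_eq (congrArg Subrepresentation.toSubmodule h.inf_eq_bot)
    (congrArg Subrepresentation.toSubmodule h.sup_eq_top)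

theorem finrank_toSubmodule_pos {k G V : Type*} [DivisionRing k] [Monoid G] [AddCommGroup V]
    [Module k V] [FiniteDimensional k V] {ρ : Representation k G V} {σ : Subrepresentation ρ}
    (h : σ ≠ ⊥) : 0 < Module.finrank k σ.toSubmodule :=
  Nat.pos_of_ne_zero fun h0 =>
    h (Subrepresentation.toSubmodule_injective (Submodule.finrank_eq_zero.mp h0))

theorem character_eq_add_of_isCompl {k G V : Type*} [Field k] [Monoid G] [AddCommGroup V]
    [Module k V] [FiniteDimensional k V] {ρ : Representation k G V} {σ τ : Subrepresentation ρ}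
    (h : IsCompl σ τ) :
    ρ.character = σ.toRepresentation.character + τ.toRepresentation.character :=
  funext fun g => trace_eq_add_of_isCompl (isCompl_toSubmodule h)
    (σ.apply_mem_toSubmodule g) (τ.apply_mem_toSubmodule g)

theorem character_eq_zero_of_subsingleton {k G V : Type*} [Field k] [Monoid G] [AddCommGroup V]
    [Module k V] [Subsingleton V] (ρ : Representation k G V) : ρ.character = 0 :=
  funext fun g => by rw [Representation.character, Subsingleton.elim (ρ g) 0, map_zero]; rfl

theorem character_mem_span_irrChar {G V : Type} [Group G] [Finite G] [AddCommGroup V] [Module ℂ V]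
    [FiniteDimensional ℂ V] (ρ : Representation ℂ G V) :
    ρ.character ∈ Submodule.span ℤ (IrrChar G) := by
  induction hn : Module.finrank ℂ V using Nat.strong_induction_on generalizing V with
  | _ n ih =>
  rcases subsingleton_or_nontrivial V with _ | _
  · rw [character_eq_zero_of_subsingleton]
    exact Submodule.zero_mem _
  by_cases hirr : ρ.IsIrreducible
  · exact Submodule.subset_span
      ⟨FDRep.of ρ, (fdRep_simple_iff_isIrreducible _).mpr hirr, rfl⟩
  have := nontrivial_subrepresentation ρ
  obtain ⟨σ, τ, hστ, hσ, hτ⟩ := exists_isCompl_ne_bot_of_not_isSimpleOrder hirr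
  have hdim := Submodule.finrank_add_eq_of_isCompl (isCompl_toSubmodule hστ)
  have hσpos := finrank_toSubmodule_pos hσ
  have hτpos := finrank_toSubmodule_pos hτ
  rw [character_eq_add_of_isCompl hστ]
  exact Submodule.add_mem _ (ih _ (by lia) _ rfl) (ih _ (by lia) _ rfl)

section ConjClasses

theorem carrier_mk_subset {G : Type*} [Group G] {C : Set G}
    (hC : ∀ g x : G, x ∈ C → g * x * g⁻¹ ∈ C) {x : G} (hx : x ∈ C) :
    (ConjClasses.mk x).carrier ⊆ C := by
  intro y hy
  rw [ConjClasses.mem_carrier_iff_mk_eq, ConjClasses.mk_eq_mk_iff_isConj] at hy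
  obtain ⟨c, rfl⟩ := isConj_iff.mp hy.symm
  exact hC c x hx

theorem conjClasses_map_leftInverse {G Q : Type*} [Monoid G] [Monoid Q] {p : G →* Q} {s : Q →* G}
    (hps : Function.LeftInverse p s) :
    Function.LeftInverse (ConjClasses.map p) (ConjClasses.map s) := by
  intro d
  obtain ⟨q, rfl⟩ := ConjClasses.mk_surjective d
  exact congrArg ConjClasses.mk (hps q)

variable {G Q : Type*} [Group G] [Group Q] {p : G →* Q} {s : Q →* G} {C : Set G}

theorem exists_isConj_section_of_card_eq [Finite (ConjClasses Q)] (hps : Function.LeftInverse p s)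
    (hC : ∀ g x : G, x ∈ C → g * x * g⁻¹ ∈ C) (hsC : ∀ q, s q ∈ C)
    (hcard : Nat.card {c : ConjClasses G // c.carrier ⊆ C} = Nat.card (ConjClasses Q))
    {g : G} (hg : g ∈ C) : ∃ q, IsConj (s q) g := by
  have hmap (d : ConjClasses Q) : (ConjClasses.map s d).carrier ⊆ C := by
    obtain ⟨q, rfl⟩ := ConjClasses.mk_surjective d
    exact carrier_mk_subset hC (hsC q)
  let F : ConjClasses Q → {c : ConjClasses G // c.carrier ⊆ C} := fun d => ⟨_, hmap d⟩
  have hinj : Function.Injective F := fun d e h =>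
    (conjClasses_map_leftInverse hps).injective (congrArg Subtype.val h)
  have : Finite {c : ConjClasses G // c.carrier ⊆ C} :=
    Nat.finite_of_card_ne_zero (hcard ▸ Nat.card_ne_zero.mpr ⟨⟨ConjClasses.mk 1⟩, inferInstance⟩)
  have hbij : Function.Bijective F :=
    (Nat.bijective_iff_injective_and_card F).mpr ⟨hinj, hcard.symm⟩
  obtain ⟨d, hd⟩ := hbij.surjective ⟨ConjClasses.mk g, carrier_mk_subset hC hg⟩
  obtain ⟨q, rfl⟩ := ConjClasses.mk_surjective d
  exact ⟨q, ConjClasses.mk_eq_mk_iff_isConj.mp (congrArg Subtype.val hd)⟩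

theorem isConj_section_proj (hps : Function.LeftInverse p s) {g : G} {q : Q}
    (h : IsConj (s q) g) : IsConj (s (p g)) g := by
  have hq : IsConj q (p g) := by simpa only [hps q] using p.map_isConj h
  exact (s.map_isConj hq).symm.trans h

theorem character_eq_of_isConj {k : Type*} [Field k] (V : FDRep k G) {x y : G} (h : IsConj x y) :
    V.character x = V.character y := by
  obtain ⟨c, rfl⟩ := isConj_iff.mp h
  exact (V.char_conj x c).symm

end ConjClasses

section Truncation

variable {G Q : Type} {C : Set G}

/-- Truncation to `C` as a `ℤ`-linear map. -/
def truncLinearMap (C : Set G) : (G → ℂ) →ₗ[ℤ] (G → ℂ) where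
  toFun := truncCF C
  map_add' φ φ' := by ext g; by_cases hg : g ∈ C <;> simp [truncCF, hg]
  map_smul' n φ := by ext g; by_cases hg : g ∈ C <;> simp [truncCF, hg]

theorem truncCF_congr {φ φ' : G → ℂ} (h : ∀ g ∈ C, φ g = φ' g) : truncCF C φ = truncCF C φ' :=
  funext fun g => if_ctx_congr Iff.rfl (h g) fun _ => rfl

theorem truncCF_comp_section {p : G → Q} {s : Q → G} (hps : Function.LeftInverse p s)
    (hsC : ∀ q, s q ∈ C) (ψ : Q → ℂ) : truncCF C (ψ ∘ p) ∘ s = ψ :=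
  funext fun q => (if_pos (hsC q)).trans (congrArg ψ (hps q))

theorem linearIndepOn_truncCF_inflation {p : G → Q} {s : Q → G} (hps : Function.LeftInverse p s)
    (hsC : ∀ q, s q ∈ C) {b : Set (Q → ℂ)} (hb : LinearIndepOn ℤ id b) :
    LinearIndepOn ℤ (truncCF C) ((· ∘ p) '' b) := by
  refine LinearIndepOn.image_of_comp (· ∘ p) (truncCF C) ?_
  refine LinearIndependent.of_comp (LinearMap.funLeft ℤ ℂ s) ?_
  have hrestrict : LinearMap.funLeft ℤ ℂ s ∘ (fun ψ : b => truncCF C (ψ.1 ∘ p)) = (↑) :=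
    funext fun ψ => truncCF_comp_section hps hsC ψ.1
  exact hrestrict.symm ▸ hb.linearIndependent

theorem truncCF_comp_mem_span {p : G → Q} {b : Set (Q → ℂ)} {φ : Q → ℂ}
    (hφ : φ ∈ Submodule.span ℤ b) :
    truncCF C (φ ∘ p) ∈ Submodule.span ℤ (truncCF C '' ((· ∘ p) '' b)) := by
  have h := Submodule.mem_map_of_mem (f := truncLinearMap C ∘ₗ LinearMap.funLeft ℤ ℂ p) hφ
  rwa [Submodule.map_span, LinearMap.coe_comp, Set.image_comp] at h

end Truncation

section SemidirectProduct

variable {G : Type*} [Group G] {H K : Subgroup G} {π : G → K}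

theorem proj_eq_of_mul_inv_mem (hHK : H ⊓ K = ⊥) (hπ : ∀ g : G, g * (π g : G)⁻¹ ∈ H) {g : G} {k : K}
    (hk : g * (k : G)⁻¹ ∈ H) : π g = k := by
  have hH : (π g : G) * (k : G)⁻¹ ∈ H := by
    simpa [mul_assoc] using H.mul_mem (H.inv_mem (hπ g)) hk
  have hK : (π g : G) * (k : G)⁻¹ ∈ K := K.mul_mem (π g).2 (K.inv_mem k.2)
  have h : (π g : G) * (k : G)⁻¹ ∈ H ⊓ K := ⟨hH, hK⟩
  rw [hHK, Subgroup.mem_bot] at h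
  exact Subtype.ext (mul_inv_eq_one.mp h)

theorem proj_mul [H.Normal] (hHK : H ⊓ K = ⊥) (hπ : ∀ g : G, g * (π g : G)⁻¹ ∈ H) (a b : G) :
    π (a * b) = π a * π b := by
  refine proj_eq_of_mul_inv_mem hHK hπ ?_
  -- `a b (π a π b)⁻¹ = (a (π a)⁻¹) · (π a) (b (π b)⁻¹) (π a)⁻¹`
  simpa [mul_assoc] using
    H.mul_mem (hπ a) (Subgroup.Normal.conj_mem inferInstance _ (hπ b) (π a : G))

/-- The projection `π` of an internal semidirect product `H ⋊ K` onto `K`, as a homomorphism; `π` is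
encoded by the property that `g` and `π g` lie in the same coset of `H`. -/
def semidirectProj [H.Normal] (hHK : H ⊓ K = ⊥) (hπ : ∀ g : G, g * (π g : G)⁻¹ ∈ H) : G →* K :=
  MonoidHom.mk' π (proj_mul hHK hπ)

theorem semidirectProj_leftInverse_subtype [H.Normal] (hHK : H ⊓ K = ⊥)
    (hπ : ∀ g : G, g * (π g : G)⁻¹ ∈ H) :
    Function.LeftInverse (semidirectProj hHK hπ) K.subtype := fun k =>
  proj_eq_of_mul_inv_mem hHK hπ (by simp [H.one_mem])

end SemidirectProduct

theorem semidirect_inflation_isBasicSet_general {G Q : Type} [Group G] [Group Q] [Finite Q]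
    (p : G →* Q) (s : Q →* G) (hps : Function.LeftInverse p s)
    (C : Set G) (hC : ∀ g x : G, x ∈ C → g * x * g⁻¹ ∈ C) (hsC : ∀ q, s q ∈ C)
    (hcard : Nat.card {c : ConjClasses G // c.carrier ⊆ C} = Nat.card (ConjClasses Q)) :
    IsBasicSetOf C (IrrChar G) ((· ∘ p) '' IrrChar Q) := by
  have hinfl : (· ∘ p) '' IrrChar Q ⊆ IrrChar G :=
    Set.image_subset_iff.mpr fun _ => comp_mem_irrChar hps.surjective
  have hindep : LinearIndepOn ℤ id (IrrChar Q) := linearIndepOn_irrChar.restrict_scalars' ℤ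
  refine ⟨hinfl, linearIndepOn_truncCF_inflation hps hsC hindep,
    le_antisymm (Submodule.span_mono (Set.image_mono hinfl)) (Submodule.span_le.mpr ?_)⟩
  rintro _ ⟨_, ⟨V, -, rfl⟩, rfl⟩
  have hV : truncCF C V.character = truncCF C ((V.character ∘ s) ∘ p) :=
    truncCF_congr fun g hg => by
      obtain ⟨q, hq⟩ := exists_isConj_section_of_card_eq hps hC hsC hcard hg
      exact (character_eq_of_isConj V (isConj_section_proj hps hq)).symm
  rw [hV]
  exact truncCF_comp_mem_span (character_mem_span_irrChar (MonoidHom.comp V.ρ s))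

/-- Let `G = H ⋊ K` be an internal semidirect product with canonical projection `π : G → K`,
and let `C` be a conjugation-invariant subset of `G` containing `K` such that the number of
`G`-conjugacy classes contained in `C` equals the number of conjugacy classes of `K`. Then
the characters `ψ ∘ π`, for `ψ ∈ Irr K`, are irreducible characters of `G`, and they form a
`C`-basic set of `G`. -/
theorem semidirect_inflation_isBasicSet {G : Type} [Group G] [Fintype G]
    (H K : Subgroup G) [H.Normal]
    (hHK : H ⊓ K = ⊥)
    (hprod : ∀ g : G, ∃ h ∈ H, ∃ k ∈ K, g = h * k)
    (π : G → ↥K) (hπ : ∀ g : G, g * ((π g : G))⁻¹ ∈ H)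
    (C : Set G) (hC : ∀ g x : G, x ∈ C → g * x * g⁻¹ ∈ C)
    (hKC : (K : Set G) ⊆ C)
    (hcard : Nat.card {c : ConjClasses G // ConjClasses.carrier c ⊆ C}
      = Nat.card (ConjClasses ↥K)) :
    (fun ψ : ↥K → ℂ => (fun g : G => ψ (π g))) '' IrrChar ↥K ⊆ IrrChar G ∧
    IsBasicSetOf C (IrrChar G) ((fun ψ : ↥K → ℂ => (fun g : G => ψ (π g))) '' IrrChar ↥K) := by
  have hbasic := semidirect_inflation_isBasicSet_general (semidirectProj hHK hπ) K.subtype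
    (semidirectProj_leftInverse_subtype hHK hπ) C hC (fun k => hKC k.2) hcard
  exact ⟨hbasic.1, hbasic⟩
end
end

section
/- Let ι be a finite type, let D be a square matrix over ℤ indexed by ι whose determinant is a unit of ℤ (i.e. det D = ±1), and let σ and τ be permutations of ι such that D(σ(i), τ(j)) = D(i, j) for all i, j ∈ ι. Then σ and τ have the same number of fixed points. -/
/-!
With `P`, `Q` the permutation matrices of `σ`, `τ`, the invariance of `D` says `P * D = D * Q`.
Multiplying by the adjugate of `D` and taking traces gives `det D * tr P = det D * tr Q`, without
inverting `D`; cancelling `det D` leaves the numbers of fixed points of `σ` and `τ`.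
-/

section Trace

variable {n R : Type*} [Fintype n] [DecidableEq n] [CommRing R]

theorem det_mul_trace_eq_of_mul_eq_mul {A B D : Matrix n n R} (h : A * D = D * B) :
    D.det * A.trace = D.det * B.trace :=
  calc D.det * A.trace = (A * D * D.adjugate).trace := by
        rw [Matrix.mul_assoc, Matrix.mul_adjugate, Matrix.mul_smul, Matrix.mul_one,
          Matrix.trace_smul, smul_eq_mul]
    _ = (D.adjugate * (D * B)).trace := by rw [h, Matrix.trace_mul_comm]
    _ = D.det * B.trace := by
        rw [← Matrix.mul_assoc, Matrix.adjugate_mul, Matrix.smul_mul, Matrix.one_mul,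
          Matrix.trace_smul, smul_eq_mul]

theorem trace_eq_of_mul_eq_mul {A B D : Matrix n n R} (hD : D.det ∈ nonZeroDivisors R)
    (h : A * D = D * B) : A.trace = B.trace :=
  (mul_cancel_left_mem_nonZeroDivisors hD).mp (det_mul_trace_eq_of_mul_eq_mul h)

end Trace

theorem permMatrix_mul_eq_mul_permMatrix_iff {m n R : Type*} [Fintype m] [DecidableEq m]
    [Fintype n] [DecidableEq n] [NonAssocSemiring R] {D : Matrix m n R} {σ : Equiv.Perm m}
    {τ : Equiv.Perm n} :
    σ.permMatrix R * D = D * τ.permMatrix R ↔ ∀ i j, D (σ i) (τ j) = D i j := by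
  rw [PEquiv.toMatrix_toPEquiv_mul, PEquiv.mul_toMatrix_toPEquiv, ← Matrix.ext_iff]
  refine forall_congr' fun i => ?_
  rw [← τ.forall_congr_right]
  simp only [Matrix.submatrix_apply, id_eq, Equiv.symm_apply_apply]

theorem ncard_fixedPoints_eq_card_filter {α : Type*} [Fintype α] [DecidableEq α] (f : α → α) :
    (Function.fixedPoints f).ncard = (Finset.univ.filter fun a => f a = a).card := by
  rw [← Set.ncard_coe_finset, Finset.coe_filter_univ]
  rfl

theorem fixedPoints_card_eq_of_invariant_unimodular_general {ι R : Type*} [Fintype ι]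
    [DecidableEq ι] [CommRing R] [CharZero R] (D : Matrix ι ι R)
    (hD : D.det ∈ nonZeroDivisors R)
    (σ τ : Equiv.Perm ι) (h : ∀ i j, D (σ i) (τ j) = D i j) :
    (Finset.univ.filter fun i => σ i = i).card
      = (Finset.univ.filter fun i => τ i = i).card := by
  have trace_eq : (σ.permMatrix R).trace = (τ.permMatrix R).trace :=
    trace_eq_of_mul_eq_mul hD (permMatrix_mul_eq_mul_permMatrix_iff.mpr h)
  rw [Matrix.trace_permutation, Matrix.trace_permutation, Nat.cast_inj] at trace_eq
  rwa [ncard_fixedPoints_eq_card_filter, ncard_fixedPoints_eq_card_filter] at trace_eq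

/-- If `D` is an integer matrix with `det D = ±1` which is invariant under simultaneously
permuting its rows by `σ` and its columns by `τ`, then `σ` and `τ` have the same number of
fixed points. -/
theorem fixedPoints_card_eq_of_invariant_unimodular {ι : Type*} [Fintype ι] [DecidableEq ι]
    (D : Matrix ι ι ℤ) (hD : IsUnit D.det)
    (σ τ : Equiv.Perm ι) (h : ∀ i j, D (σ i) (τ j) = D i j) :
    (Finset.univ.filter fun i => σ i = i).card
      = (Finset.univ.filter fun i => τ i = i).card :=
  fixedPoints_card_eq_of_invariant_unimodular_general D hD.mem_nonZeroDivisors σ τ h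
end

section
/- Let r be a positive integer and let D be an r × r matrix over ℕ with wedge shape. Let D' be a matrix over ℕ indexed by (Fin r × Bool) × (Fin r × Bool) satisfying, for all i, j ∈ Fin r and s, t ∈ Bool: D'((i,s),(j,t)) = D'((i,¬s),(j,¬t)), and D'((i,s),(j,true)) + D'((i,s),(j,false)) = D(i,j). Then D' has wedge shape. -/
/-!
Replace each entry `D i j` by an `S × T` block of `D'` with every row and column sum equal to
`D i j`. A zero entry gives a zero block, and a `1` gives a permutation matrix, which becomes the
identity after reordering its columns. Ordering the indices of `D'` lexicographically therefore
refines the wedge order of `D` to one of `D'`. For doubling, the swap symmetry exchanges the two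
entries of a block column with those of a block row, so column sums agree with row sums.
-/

/-- A matrix `M` over `ℕ` has wedge shape if its rows and columns can be ordered so that the
resulting matrix is lower triangular with all diagonal entries equal to `1`. -/
def WedgeShape {I J : Type*} (M : Matrix I J ℕ) : Prop :=
  ∃ (m : ℕ) (ρ : Fin m ≃ I) (γ : Fin m ≃ J),
    (∀ i j : Fin m, i < j → M (ρ i) (γ j) = 0) ∧ ∀ i : Fin m, M (ρ i) (γ i) = 1

theorem exists_eq_single_of_sum_eq_one {ι : Type*} [Fintype ι] [DecidableEq ι] {f : ι → ℕ}
    (hf : ∑ i, f i = 1) : ∃ i, f = Pi.single i 1 := by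
  obtain ⟨i, hi⟩ := (Finsupp.sum_eq_one_iff (Finsupp.equivFunOnFinite.symm f)).mp
    (by simpa [Finsupp.sum_fintype] using hf)
  exact ⟨i, by simpa using congrArg Finsupp.equivFunOnFinite hi⟩

section Permutation

variable {S T : Type*}

theorem exists_eq_toMatrix_of_sum_eq_one [Fintype S] [Fintype T] [DecidableEq T]
    {A : Matrix S T ℕ} (hrow : ∀ s, ∑ t, A s t = 1) (hcol : ∀ t, ∑ s, A s t = 1) :
    ∃ σ : S ≃ T, A = σ.toPEquiv.toMatrix := by
  classical
  choose σ hσ using fun s => exists_eq_single_of_sum_eq_one (hrow s)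
  choose τ hτ using fun t => exists_eq_single_of_sum_eq_one (hcol t)
  have rowEntry (s t) : A s t = if t = σ s then 1 else 0 := by
    rw [hσ s, Pi.single_apply]
  have colEntry (s t) : A s t = if s = τ t then 1 else 0 := by
    rw [← Pi.single_apply, ← hτ t]
  have eq_iff (s t) : t = σ s ↔ s = τ t := by
    have := (rowEntry s t).symm.trans (colEntry s t)
    grind
  refine ⟨⟨σ, τ, fun s => ((eq_iff s _).mp rfl).symm, fun t => ((eq_iff _ t).mpr rfl).symm⟩, ?_⟩
  ext s t
  simp [rowEntry, PEquiv.toMatrix_apply, eq_comm]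

theorem wedgeShape_toMatrix_toPEquiv [Finite S] [DecidableEq T] (σ : S ≃ T) :
    WedgeShape (σ.toPEquiv.toMatrix : Matrix S T ℕ) := by
  obtain ⟨m, ⟨e⟩⟩ := Finite.exists_equiv_fin S
  refine ⟨m, e.symm, e.symm.trans σ, fun i j hij => ?_, fun i => ?_⟩
  · simp [PEquiv.toMatrix_apply, hij.ne]
  · simp [PEquiv.toMatrix_apply]

end Permutation

section Blocks

variable {I J K S T : Type*} [LinearOrder K]

theorem wedgeShape_of_linearOrder [Finite K] {M : Matrix I J ℕ} (ρ : K ≃ I) (γ : K ≃ J)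
    (hzero : ∀ a b, a < b → M (ρ a) (γ b) = 0) (hone : ∀ a, M (ρ a) (γ a) = 1) :
    WedgeShape M := by
  have := Fintype.ofFinite K
  let e := monoEquivOfFin K rfl
  exact ⟨_, e.toEquiv.trans ρ, e.toEquiv.trans γ, fun _ _ hij => hzero _ _ (e.strictMono hij),
    fun i => hone (e i)⟩

theorem wedgeShape_of_blocks [Finite K] {M : Matrix (I × S) (J × T) ℕ} (ρ : K ≃ I) (γ : K ≃ J)
    (hzero : ∀ a b, a < b → M.submatrix (Prod.mk (ρ a)) (Prod.mk (γ b)) = 0)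
    (hdiag : ∀ a, WedgeShape (M.submatrix (Prod.mk (ρ a)) (Prod.mk (γ a)))) :
    WedgeShape M := by
  choose n σ τ hzeroDiag honeDiag using hdiag
  have : Finite (Σₗ a, Fin (n a)) := inferInstanceAs (Finite (Σ a, Fin (n a)))
  let rows : (Σₗ a, Fin (n a)) ≃ I × S :=
    ofLex.trans ((Equiv.sigmaCongr ρ σ).trans (Equiv.sigmaEquivProd I S))
  let cols : (Σₗ a, Fin (n a)) ≃ J × T :=
    ofLex.trans ((Equiv.sigmaCongr γ τ).trans (Equiv.sigmaEquivProd J T))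
  refine wedgeShape_of_linearOrder rows cols ?_ fun ⟨a, p⟩ => honeDiag a p
  rintro ⟨a, p⟩ ⟨b, q⟩ (⟨_, _, hab⟩ | ⟨_, q, hpq⟩)
  · exact congrFun₂ (hzero a b hab) (σ a p) (τ b q)
  · exact hzeroDiag a p q hpq

end Blocks

theorem wedgeShape_doubling_general {I J S T : Type*} [Fintype S] [Fintype T]
    {D : Matrix I J ℕ} (hD : WedgeShape D) {D' : Matrix (I × S) (J × T) ℕ}
    (hrow : ∀ i j s, ∑ t, D' (i, s) (j, t) = D i j)
    (hcol : ∀ i j t, ∑ s, D' (i, s) (j, t) = D i j) :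
    WedgeShape D' := by
  classical
  obtain ⟨m, ρ, γ, hzero, hone⟩ := hD
  refine wedgeShape_of_blocks ρ γ (fun a b hab => ?_) fun a => ?_
  · ext s t
    have rowSum_eq_zero := (hrow (ρ a) (γ b) s).trans (hzero a b hab)
    exact Finset.sum_eq_zero_iff.mp rowSum_eq_zero t (Finset.mem_univ t)
  · obtain ⟨σ, hσ⟩ := exists_eq_toMatrix_of_sum_eq_one
      (A := D'.submatrix (Prod.mk (ρ a)) (Prod.mk (γ a)))
      (fun s => (hrow _ _ s).trans (hone a)) (fun t => (hcol _ _ t).trans (hone a))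
    exact hσ ▸ wedgeShape_toMatrix_toPEquiv σ

/-- If `D` is an `r × r` matrix over `ℕ` of wedge shape and `D'` is a doubled matrix
satisfying `D'((i,s),(j,t)) = D'((i,¬s),(j,¬t))` and
`D'((i,s),(j,true)) + D'((i,s),(j,false)) = D(i,j)`, then `D'` has wedge shape. -/
theorem wedgeShape_doubling (r : ℕ) (hr : 0 < r) (D : Matrix (Fin r) (Fin r) ℕ)
    (hD : WedgeShape D)
    (D' : Matrix (Fin r × Bool) (Fin r × Bool) ℕ)
    (h1 : ∀ (i j : Fin r) (s t : Bool), D' (i, s) (j, t) = D' (i, !s) (j, !t))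
    (h2 : ∀ (i j : Fin r) (s : Bool), D' (i, s) (j, true) + D' (i, s) (j, false) = D i j) :
    WedgeShape D' :=
  wedgeShape_doubling_general hD (fun i j s => (Fintype.sum_bool _).trans (h2 i j s))
    fun i j t => by cases t <;> simp [← h2 i j true, h1 i j false, add_comm]
end
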